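/- (Corollary to Theorem 3, perturbed descent.) Under the setting of Theorem 3 (x, x⁺ ∈ ℝ^n, d = x⁺ − x, X the diagonal matrix with X_{jj} = 1/max(ε,(Gx−g)_j) on A = {j : (Gx−g)_j ≥ 0} and 0 elsewhere, and x⁺ satisfying α P d + ∇F(x) + β Gᵗ X (Gx⁺ − g) = 0), assume (ii) α⟨P d, d⟩ − (F(x⁺) − F(x) − ⟨∇F(x), d⟩) ≥ ω‖d‖² with ω > 0, and assume that for some 0 ≤ ω' < ω one has (β/2)⟨X G d, G d⟩ − β Σ_{i ∉ A} ( φ_ε((Gx⁺ − g)_i) − φ_ε((Gx − g)_i) ) ≥ −ω'‖d‖². Then (ω − ω')‖x⁺ − x‖² + J_ε(x⁺) ≤ J_ε(x), where J_ε(x) = F(x) + β ψ_ε(Gx − g). -/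

import Mathlib

/-!
The argument is a majorization. For a coordinate `s ≥ 0` with weight `w = 1 / max ε s`, the
parabola `t ↦ φ_ε(s) + w * (t² - s²) / 2` lies above `φ_ε` (`phiEps_sub_le`): with
`c = max ε s` it is `t ↦ t² / (2c) + c / 2`, it touches the graph at `s`, and it majorizes `φ_ε` for
every `c ≥ ε` (`phiEps_le_parabola`). Since `(t² - s²) / 2 = t * (t - s) - (t - s)² / 2`, summing over `A` bounds the increase
of `ψ_ε` there by `⟨X (Gx⁺ - g), G d⟩ - ⟨X G d, G d⟩ / 2`. Pairing the update equation with `d`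
turns `β ⟨X (Gx⁺ - g), G d⟩` into `-(α ⟨P d, d⟩ + ⟨∇F(x), d⟩)`, which the condition on `F` compares
with `F(x) - F(x⁺)`; the remaining quadratic term and the coordinates outside `A` form exactly the
quantity controlled by the perturbation hypothesis.
-/

open Matrix

/-- The regularization `φ_ε` of `s ↦ max 0 s`. -/
noncomputable def phiEps (ε s : ℝ) : ℝ :=
  if s ≤ 0 then ε / 2 else if s ≤ ε then s ^ 2 / (2 * ε) + ε / 2 else s

/-- `ψ_ε(y) = Σ_i φ_ε(y_i)`. -/
noncomputable def psiEps (ε : ℝ) {m : ℕ} (y : Fin m → ℝ) : ℝ := ∑ i, phiEps ε (y i)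

/-- `φ_ε` lies below each parabola `t ↦ t² / (2c) + c / 2` with `c ≥ ε`. -/
lemma phiEps_le_parabola {ε c : ℝ} (hε : 0 < ε) (hc : ε ≤ c) (t : ℝ) :
    phiEps ε t ≤ t ^ 2 / (2 * c) + c / 2 := by
  have hc0 : 0 < c := hε.trans_le hc
  have key : t ^ 2 / (2 * c) + c / 2 = (t ^ 2 + c ^ 2) / (2 * c) := by field_simp
  unfold phiEps
  split_ifs with h1 h2
  · have : 0 ≤ t ^ 2 / (2 * c) := by positivity
    linarith
  · push Not at h1
    -- The difference of the two sides factors as `(c - ε) (c ε - t²) / (2 c ε)`.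
    have h3 : t ^ 2 / (2 * c) + c / 2 - (t ^ 2 / (2 * ε) + ε / 2)
        = (c - ε) * (c * ε - t ^ 2) / (2 * c * ε) := by
      field_simp
      ring
    have h4 : 0 ≤ c * ε - t ^ 2 := by nlinarith
    have h5 : 0 ≤ (c - ε) * (c * ε - t ^ 2) / (2 * c * ε) :=
      div_nonneg (mul_nonneg (by linarith) h4) (by positivity)
    linarith
  · rw [key, le_div_iff₀ (by positivity)]
    nlinarith [sq_nonneg (t - c)]

/-- The quadratic majorization of `φ_ε` at a point `s ≥ 0`. -/
lemma phiEps_sub_le {ε s : ℝ} (hε : 0 < ε) (hs : 0 ≤ s) (t : ℝ) :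
    phiEps ε t - phiEps ε s ≤ 1 / max ε s * (t ^ 2 - s ^ 2) / 2 := by
  have h := phiEps_le_parabola hε (le_max_left ε s) t
  have hm : 0 < max ε s := hε.trans_le (le_max_left ε s)
  have hs' : phiEps ε s = s ^ 2 / (2 * max ε s) + max ε s / 2 := by
    unfold phiEps
    split_ifs with h1 h2
    · obtain rfl : s = 0 := le_antisymm h1 hs
      simp [max_eq_left hε.le]
    · rw [max_eq_left h2]
    · push Not at h1 h2
      rw [max_eq_right h2.le]
      field_simp
      ring
  have e : 1 / max ε s * (t ^ 2 - s ^ 2) / 2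
      = t ^ 2 / (2 * max ε s) - s ^ 2 / (2 * max ε s) := by
    field_simp
  rw [hs', e]
  linarith

/-- Corollary to Theorem 3: perturbed descent.  Here `d ⬝ᵥ d = ‖d‖²`. -/
theorem stmt12 {n m : ℕ} (F : (Fin n → ℝ) → ℝ) (hF : Differentiable ℝ F)
    (G : Matrix (Fin m) (Fin n) ℝ) (g : Fin m → ℝ)
    (α β ε ω ω' : ℝ) (hα : 0 < α) (hβ : 0 < β) (hε : 0 < ε)
    (hω : 0 < ω) (hω' : 0 ≤ ω') (hωω' : ω' < ω)
    (P : Matrix (Fin n) (Fin n) ℝ)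
    (x xp d : Fin n → ℝ) (hd : d = xp - x)
    (Fx' : Fin n → ℝ) (hgrad : ∀ v : Fin n → ℝ, fderiv ℝ F x v = Fx' ⬝ᵥ v)
    (X : Matrix (Fin m) (Fin m) ℝ)
    (hX : X = Matrix.diagonal fun j =>
      if 0 ≤ (G.mulVec x - g) j then 1 / max ε ((G.mulVec x - g) j) else 0)
    (hupdate : α • P.mulVec d + Fx' + β • Gᵀ.mulVec (X.mulVec (G.mulVec xp - g)) = 0)
    (hR : α * (P.mulVec d ⬝ᵥ d) - (F xp - F x - Fx' ⬝ᵥ d) ≥ ω * (d ⬝ᵥ d))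
    (hpert : (β / 2) * (X.mulVec (G.mulVec d) ⬝ᵥ G.mulVec d) -
        β * ∑ i ∈ Finset.univ.filter (fun i => (G.mulVec x - g) i < 0),
          (phiEps ε ((G.mulVec xp - g) i) - phiEps ε ((G.mulVec x - g) i))
        ≥ -(ω' * (d ⬝ᵥ d))) :
    (ω - ω') * (d ⬝ᵥ d) + (F xp + β * psiEps ε (G.mulVec xp - g))
      ≤ F x + β * psiEps ε (G.mulVec x - g) := by
  set s : Fin m → ℝ := G.mulVec x - g with hs
  set t : Fin m → ℝ := G.mulVec xp - g with ht
  set w : Fin m → ℝ := fun j => if 0 ≤ s j then 1 / max ε (s j) else 0 with hw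
  have hGd : G.mulVec d = t - s := by
    rw [hd, Matrix.mulVec_sub, hs, ht]
    abel
  have hpair : α * (P.mulVec d ⬝ᵥ d) + Fx' ⬝ᵥ d + β * ∑ i, w i * t i * (t i - s i) = 0 := by
    have h := congrArg (fun v => v ⬝ᵥ d) hupdate
    simp only [add_dotProduct, smul_dotProduct, zero_dotProduct, smul_eq_mul] at h
    rw [Matrix.mulVec_transpose, ← Matrix.dotProduct_mulVec, hGd, hX] at h
    simpa only [dotProduct, Matrix.mulVec_diagonal, Pi.sub_apply] using h
  have hquad : X.mulVec (G.mulVec d) ⬝ᵥ G.mulVec d = ∑ i, w i * (t i - s i) * (t i - s i) := by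
    rw [hGd, hX]
    simp only [dotProduct, Matrix.mulVec_diagonal, Pi.sub_apply]
  rw [hquad, Finset.sum_filter] at hpert
  have hpsi : psiEps ε t - psiEps ε s ≤ ∑ i, w i * t i * (t i - s i)
      - (∑ i, w i * (t i - s i) * (t i - s i)) / 2
      + ∑ i, (if s i < 0 then phiEps ε (t i) - phiEps ε (s i) else 0) := by
    unfold psiEps
    rw [← Finset.sum_sub_distrib, Finset.sum_div, ← Finset.sum_sub_distrib,
      ← Finset.sum_add_distrib]
    refine Finset.sum_le_sum fun i _ => ?_
    by_cases h : 0 ≤ s i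
    · have hwi : w i = 1 / max ε (s i) := if_pos h
      have h1 := phiEps_sub_le hε h (t i)
      rw [← hwi] at h1
      rw [if_neg h.not_gt]
      linarith
    · have hwi : w i = 0 := if_neg h
      rw [if_pos (not_le.mp h), hwi]
      linarith
  have hpsi' := mul_le_mul_of_nonneg_left hpsi hβ.le
  linarith
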